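/- For Re(s) > 0 and θ ∈ (0, 1], ∫₀¹ ρ(θ/x) x^{s−1} dx = θ/(s−1) − (θ^s/s) ζ(s) + θ^s/s if s ≠ 1 (interpreting the right-hand side by analytic continuation of ζ), i.e., s ∫₀¹ ρ(θ/x) x^{s−1} dx = sθ/(s−1) − θ^s ζ(s) + θ^s − 1 + 1 adjusted so that ∫₀¹ (ρ(θ/x) − θ/x) x^{s−1} dx extends analytically; concretely, for Re(s) > 1: ∫₀¹ ρ(θ/x) x^{s−1} dx = θ/(s−1) − (θ^s/s)(ζ(s) − 1) − (1 − θ^s)/s · 0 + correction — state precisely as: ∫₀¹ ρ(θ/x) x^{s−1} dx = θ/(s−1) + (θ^s/s)(1 − ζ(s)) + (1 − θ^s)·0, i.e., the single-term case of the Beurling identity: ∫₀¹ (ρ(θ/x)·1 + (1 − θ·(1/θ)·0)) — formally: for a single pair (a, θ) = (1, θ), ∫₀¹ ρ(θ/x) x^{s−1} dx = θ/(s−1) − (ζ(s) θ^s)/s, valid for 0 < Re(s) < 1 by analytic continuation, and for Re(s) > 1 with ζ the usual series. -/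

import Mathlib

open MeasureTheory

/-!
Write `ρ(θ/x) = θ/x - ⌊θ/x⌋`. For `1 < Re s` the two terms can be integrated separately: `θ/x`
gives `θ/(s-1)`, while `⌊θ/x⌋` vanishes for `x > 1 ≥ θ`, so that its integral is a full Mellin
transform, which Abel summation evaluates as `θ^s ζ(s)/s`. Since `ρ` is bounded, the left-hand side
is holomorphic for `0 < Re s`, and the identity extends there by analytic continuation once the pole
of `ζ` at `1` is cleared.
-/

open Set Filter Asymptotics
open scoped Topology

section Indicator

variable {E : Type*} [NormedAddCommGroup E]

lemma indicator_Ioc_isBigO_atTop {α F : Type*} [Preorder α] [NoMaxOrder α] [Norm F]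
    (f : α → E) (a b : α) (g : α → F) :
    (Ioc a b).indicator f =O[atTop] g := by
  have hzero : (Ioc a b).indicator f =ᶠ[atTop] 0 := by
    filter_upwards [eventually_gt_atTop b] with x hx
    exact indicator_of_notMem (fun h ↦ hx.not_ge h.2) f
  exact hzero.trans_isBigO (isBigO_zero _ _)

lemma locallyIntegrableOn_indicator {X : Type*} [TopologicalSpace X] [MeasurableSpace X]
    {μ : Measure X} {f : X → E} {s t : Set X}
    (hf : LocallyIntegrableOn f t μ) (hs : MeasurableSet s) :
    LocallyIntegrableOn (s.indicator f) t μ := fun x hx ↦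
  let ⟨u, hu, hfu⟩ := hf x hx
  ⟨u, hu, hfu.indicator hs⟩

end Indicator

section Mellin

variable {E : Type*} [NormedAddCommGroup E] [NormedSpace ℂ E]

lemma mellin_comp_const_div (f : ℝ → E) (s : ℂ) {a : ℝ} (ha : 0 < a) :
    mellin (fun x ↦ f (a / x)) s = (a : ℂ) ^ s • mellin f (-s) := by
  calc mellin (fun x ↦ f (a / x)) s
      = mellin (fun x ↦ f (a⁻¹ * x)⁻¹) s := by simp only [mul_inv, inv_inv, div_eq_mul_inv]
    _ = ((a⁻¹ : ℝ) : ℂ) ^ (-s) • mellin f (-s) := by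
        rw [mellin_comp_mul_left (fun x ↦ f x⁻¹) s (inv_pos.mpr ha), mellin_comp_inv]
    _ = (a : ℂ) ^ s • mellin f (-s) := by
        rw [Complex.ofReal_inv, Complex.inv_cpow_ofReal_nonneg ha.le, Complex.cpow_neg, inv_inv]

lemma mellin_indicator_Ioc (f : ℝ → E) (s : ℂ) {b : ℝ} (hb : 0 ≤ b) :
    mellin ((Ioc 0 b).indicator f) s = ∫ x in (0 : ℝ)..b, (x : ℂ) ^ (s - 1) • f x := by
  simp only [mellin, ← indicator_smul]
  rw [setIntegral_indicator measurableSet_Ioc, inter_eq_right.mpr Ioc_subset_Ioi_self,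
    intervalIntegral.integral_of_le hb]

variable {f : ℝ → E} {a b : ℝ} {s : ℂ}

lemma mellinConvergent_indicator_Ioc (hf : LocallyIntegrableOn f (Ioi 0))
    (hf_zero : f =O[𝓝[>] 0] (· ^ (-a))) (hs : a < s.re) :
    MellinConvergent ((Ioc 0 b).indicator f) s :=
  mellinConvergent_of_isBigO_rpow (locallyIntegrableOn_indicator hf measurableSet_Ioc)
    (indicator_Ioc_isBigO_atTop f 0 b _) (lt_add_one s.re)
    ((isBigO_of_le _ fun x ↦ norm_indicator_le_norm_self f x).trans hf_zero) hs

lemma differentiableAt_mellin_indicator_Ioc (hf : LocallyIntegrableOn f (Ioi 0))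
    (hf_zero : f =O[𝓝[>] 0] (· ^ (-a))) (hs : a < s.re) :
    DifferentiableAt ℂ (mellin ((Ioc 0 b).indicator f)) s :=
  mellin_differentiableAt_of_isBigO_rpow (locallyIntegrableOn_indicator hf measurableSet_Ioc)
    (indicator_Ioc_isBigO_atTop f 0 b _) (lt_add_one s.re)
    ((isBigO_of_le _ fun x ↦ norm_indicator_le_norm_self f x).trans hf_zero) hs

end Mellin

section SummatoryFunction

variable {s : ℂ}

lemma mellin_sum_Icc_natFloor_neg (f : ℕ → ℂ) {r : ℝ} (hr : 0 ≤ r) (hs : r < s.re)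
    (hf : (fun n ↦ ∑ k ∈ Finset.Icc 1 n, ‖f k‖) =O[atTop] fun n ↦ (n : ℝ) ^ r) :
    mellin (fun t ↦ ∑ k ∈ Finset.Icc 1 ⌊t⌋₊, f k) (-s) = LSeries f s / s := by
  have hs0 : s ≠ 0 := Complex.ne_zero_of_re_pos (hr.trans_lt hs)
  rw [LSeries_eq_mul_integral' f hr hs hf, mul_div_cancel_left₀ _ hs0]
  calc mellin (fun t ↦ ∑ k ∈ Finset.Icc 1 ⌊t⌋₊, f k) (-s)
      = ∫ t in Ici (1 : ℝ), (t : ℂ) ^ (-s - 1) • ∑ k ∈ Finset.Icc 1 ⌊t⌋₊, f k := by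
        refine setIntegral_eq_of_subset_of_forall_sdiff_eq_zero measurableSet_Ioi
          (Ici_subset_Ioi.mpr zero_lt_one) fun t ht ↦ ?_
        have hfloor : ⌊t⌋₊ = 0 := Nat.floor_eq_zero.mpr (not_le.mp ht.2)
        simp [hfloor]
    _ = ∫ t in Ioi (1 : ℝ), (∑ k ∈ Finset.Icc 1 ⌊t⌋₊, f k) * (t : ℂ) ^ (-(s + 1)) := by
        simp only [integral_Ici_eq_integral_Ioi, smul_eq_mul, neg_add', mul_comm]

lemma mellin_natFloor_neg (hs : 1 < s.re) :
    mellin (fun t ↦ (⌊t⌋₊ : ℂ)) (-s) = riemannZeta s / s := by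
  have hbound : (fun n : ℕ ↦ ∑ k ∈ Finset.Icc 1 n, ‖(1 : ℕ → ℂ) k‖) =O[atTop]
      fun n ↦ (n : ℝ) ^ (1 : ℝ) :=
    IsBigO.of_norm_le fun n ↦ by simp
  simpa [LSeries_one_eq_riemannZeta hs] using
    mellin_sum_Icc_natFloor_neg (1 : ℕ → ℂ) zero_le_one hs hbound

lemma mellin_natFloor_const_div {θ : ℝ} (hθ : 0 < θ) (hs : 1 < s.re) :
    mellin (fun x ↦ (⌊θ / x⌋₊ : ℂ)) s = (θ : ℂ) ^ s * (riemannZeta s / s) := by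
  rw [mellin_comp_const_div (fun t ↦ (⌊t⌋₊ : ℂ)) s hθ, mellin_natFloor_neg hs, smul_eq_mul]

end SummatoryFunction

/-- The function `x ↦ ρ(θ/x)` of Beurling's criterion, complex-valued so that its Mellin transform
can be taken. It is defined on all of `ℝ`; the restriction to `(0, 1]` is made by an indicator. -/
noncomputable def beurlingFract (θ x : ℝ) : ℂ := (Int.fract (θ / x) : ℝ)

section BeurlingFract

variable {θ : ℝ} {s : ℂ}

lemma norm_beurlingFract_le_one (θ x : ℝ) : ‖beurlingFract θ x‖ ≤ 1 := by
  rw [beurlingFract, Complex.norm_real, Real.norm_of_nonneg (Int.fract_nonneg _)]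
  exact (Int.fract_lt_one _).le

lemma locallyIntegrable_beurlingFract (θ : ℝ) : LocallyIntegrable (beurlingFract θ) := by
  have hmeas : Measurable (beurlingFract θ) :=
    Complex.measurable_ofReal.comp (measurable_const.div measurable_id).fract
  refine (locallyIntegrable_const (1 : ℝ)).mono hmeas.aestronglyMeasurable ?_
  exact ae_of_all _ fun x ↦ by simpa using norm_beurlingFract_le_one θ x

lemma beurlingFract_isBigO_rpow_zero (θ : ℝ) (l : Filter ℝ) :
    beurlingFract θ =O[l] fun x : ℝ ↦ x ^ (-(0 : ℝ)) :=
  IsBigO.of_norm_le fun x ↦ by simpa using norm_beurlingFract_le_one θ x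

lemma mellinConvergent_beurlingFract (hs : 0 < s.re) :
    MellinConvergent ((Ioc 0 1).indicator (beurlingFract θ)) s :=
  mellinConvergent_indicator_Ioc ((locallyIntegrable_beurlingFract θ).locallyIntegrableOn _)
    (beurlingFract_isBigO_rpow_zero θ _) hs

lemma differentiableAt_mellin_beurlingFract (hs : 0 < s.re) :
    DifferentiableAt ℂ (mellin ((Ioc 0 1).indicator (beurlingFract θ))) s :=
  differentiableAt_mellin_indicator_Ioc
    ((locallyIntegrable_beurlingFract θ).locallyIntegrableOn _)
    (beurlingFract_isBigO_rpow_zero θ _) hs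

lemma natFloor_const_div_eq_sub_beurlingFract (hθ0 : 0 ≤ θ) (hθ1 : θ ≤ 1) {x : ℝ} (hx : 0 < x) :
    (⌊θ / x⌋₊ : ℂ) = (Ioc 0 1).indicator (fun t : ℝ ↦ (t : ℂ) ^ (-1 : ℂ)) x * θ -
      (Ioc 0 1).indicator (beurlingFract θ) x := by
  rcases le_or_gt x 1 with hx1 | hx1
  · have hfloor : (⌊θ / x⌋₊ : ℝ) = θ / x - Int.fract (θ / x) := by
      rw [natCast_floor_eq_intCast_floor (div_nonneg hθ0 hx.le), Int.self_sub_fract]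
    have hmem : x ∈ Ioc 0 1 := ⟨hx, hx1⟩
    rw [indicator_of_mem hmem, indicator_of_mem hmem, ← Complex.ofReal_natCast, hfloor,
      Complex.cpow_neg_one, beurlingFract]
    push_cast
    ring
  · have hfloor : ⌊θ / x⌋₊ = 0 :=
      Nat.floor_eq_zero.mpr ((div_lt_one hx).mpr (hθ1.trans_lt hx1))
    have hnot : x ∉ Ioc 0 1 := fun h ↦ hx1.not_ge h.2
    simp [hfloor, indicator_of_notMem hnot]

lemma mellin_beurlingFract_of_one_lt_re (hθ0 : 0 < θ) (hθ1 : θ ≤ 1) (hs : 1 < s.re) :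
    mellin ((Ioc 0 1).indicator (beurlingFract θ)) s =
      θ / (s - 1) - riemannZeta s * (θ : ℂ) ^ s / s := by
  have hpow := hasMellin_cpow_Ioc (-1) (s := s) (by simpa using hs)
  have hfract := mellinConvergent_beurlingFract (θ := θ) (zero_lt_one.trans hs)
  have hsub := (hasMellin_sub (hpow.1.const_smul (θ : ℂ)) hfract).2
  have hfloor : mellin (fun x ↦ (⌊θ / x⌋₊ : ℂ)) s =
      θ / (s - 1) - mellin ((Ioc 0 1).indicator (beurlingFract θ)) s := by
    rw [mellin_const_smul, hpow.2, smul_eq_mul, mul_one_div, ← sub_eq_add_neg] at hsub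
    rw [← hsub]
    refine setIntegral_congr_fun measurableSet_Ioi fun x hx ↦ ?_
    simp only [natFloor_const_div_eq_sub_beurlingFract hθ0.le hθ1 hx, smul_eq_mul, mul_comm]
  rw [mellin_natFloor_const_div hθ0 hs, eq_sub_iff_add_eq'] at hfloor
  linear_combination hfloor

lemma eq_div_sub_riemannZeta_mul_div_iff {m c d : ℂ} (hs0 : s ≠ 0) (hs1 : s ≠ 1) :
    m = c / (s - 1) - riemannZeta s * d / s ↔
      s * (s - 1) * m = c * s - riemannZeta₁ s * d := by
  have hs1' : s - 1 ≠ 0 := sub_ne_zero.mpr hs1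
  rw [riemannZeta_eq_inv_sub_mul hs1, ← mul_right_inj' (mul_ne_zero hs0 hs1')]
  field_simp

lemma mul_mellin_beurlingFract (hθ0 : 0 < θ) (hθ1 : θ ≤ 1) (hs : 0 < s.re) :
    s * (s - 1) * mellin ((Ioc 0 1).indicator (beurlingFract θ)) s =
      θ * s - riemannZeta₁ s * (θ : ℂ) ^ s := by
  have hopen (c : ℝ) : IsOpen {z : ℂ | c < z.re} :=
    isOpen_lt continuous_const Complex.continuous_re
  have hleft : AnalyticOnNhd ℂ
      (fun z ↦ z * (z - 1) * mellin ((Ioc 0 1).indicator (beurlingFract θ)) z)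
      {z | 0 < z.re} := by
    refine DifferentiableOn.analyticOnNhd (fun z hz ↦ ?_) (hopen 0)
    have hmellin := differentiableAt_mellin_beurlingFract (θ := θ) hz
    exact DifferentiableAt.differentiableWithinAt (by fun_prop)
  have hright : AnalyticOnNhd ℂ (fun z ↦ θ * z - riemannZeta₁ z * (θ : ℂ) ^ z)
      {z | 0 < z.re} := by
    have hpow : Differentiable ℂ fun z : ℂ ↦ (θ : ℂ) ^ z := fun z ↦
      differentiableAt_id.const_cpow (Or.inl (Complex.ofReal_ne_zero.mpr hθ0.ne'))
    exact ((differentiable_id.const_mul (θ : ℂ)).sub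
      (differentiable_riemannZeta₁.mul hpow)).differentiableOn.analyticOnNhd (hopen 0)
  have heq : (fun z ↦ z * (z - 1) * mellin ((Ioc 0 1).indicator (beurlingFract θ)) z) =ᶠ[𝓝 2]
      fun z ↦ θ * z - riemannZeta₁ z * (θ : ℂ) ^ z := by
    filter_upwards [(hopen 1).mem_nhds (by simp : (1 : ℝ) < (2 : ℂ).re)] with z hz
    have hz0 : z ≠ 0 := Complex.ne_zero_of_re_pos (zero_lt_one.trans hz)
    have hz1 : z ≠ 1 := fun h ↦ by simp [h] at hz
    exact (eq_div_sub_riemannZeta_mul_div_iff hz0 hz1).mp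
      (mellin_beurlingFract_of_one_lt_re hθ0 hθ1 hz)
  exact hleft.eqOn_of_preconnected_of_eventuallyEq hright
    (convex_halfSpace_re_gt 0).isPreconnected (by simp) heq hs

lemma mellin_beurlingFract (hθ0 : 0 < θ) (hθ1 : θ ≤ 1) (hs : 0 < s.re) (hs1 : s ≠ 1) :
    mellin ((Ioc 0 1).indicator (beurlingFract θ)) s =
      θ / (s - 1) - riemannZeta s * (θ : ℂ) ^ s / s :=
  (eq_div_sub_riemannZeta_mul_div_iff (Complex.ne_zero_of_re_pos hs) hs1).mpr
    (mul_mellin_beurlingFract hθ0 hθ1 hs)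

end BeurlingFract

/-- Single-term Beurling identity: for Re(s) > 0, s ≠ 1, and θ ∈ (0,1],
∫₀¹ ρ(θ/x) x^{s-1} dx = θ/(s-1) - ζ(s) θ^s / s. -/
theorem fract_mellin_single (θ : ℝ) (hθ0 : 0 < θ) (hθ1 : θ ≤ 1)
    (s : ℂ) (hs : 0 < s.re) (hs1 : s ≠ 1) :
    (∫ x in (0:ℝ)..1, ((Int.fract (θ / x) : ℝ) : ℂ) * (x : ℂ) ^ (s - 1))
      = (θ : ℂ) / (s - 1) - riemannZeta s * (θ : ℂ) ^ s / s := by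
  rw [← mellin_beurlingFract hθ0 hθ1 hs hs1, mellin_indicator_Ioc _ _ zero_le_one]
  simp only [beurlingFract, smul_eq_mul, mul_comm]
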